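/- arXiv:2506.04094 — 5 statements merged into one kernel-verified Lean document; each statement's English description precedes it below -/
import Mathlib

section
/- Let n ≥ 1 and let q_0, …, q_n be positive integers. For any nonempty subset I ⊆ {0, …, n} set l_I = (∏_{i∈I} q_i) / gcd_{i∈I}(q_i), and for 0 ≤ r ≤ n set l_r = lcm{ l_I : I ⊆ {0,…,n}, |I| = r+1 }. Then for all nonnegative integers k, j with k + j ≤ n, the integer l_{k+j} divides l_k · l_j. (This is the integrality of the structure constants ξ_k · ξ_j = (l_k l_j / l_{k+j}) ξ_{k+j} in the integral cohomology ring of the weighted projective space ℙ(q_0,…,q_n).) -/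
/-!
The divisibility is checked one prime `p` at a time. If `m ∈ I` minimises the `p`-adic valuation
of `q` on `I`, then `v_p(l_I)` is the sum of `v_p(q i)` over `i ∈ I \ {m}`
(`factorization_lI`). For `|I| = k + j + 1`, split `I \ {m}` into disjoint parts `A`, `B` of sizes
`k` and `j`. As `m` is also minimal on `A ∪ {m}` and on `B ∪ {m}`, this gives
`v_p(l_I) = v_p(l_{A ∪ {m}}) + v_p(l_{B ∪ {m}}) ≤ v_p(l_k) + v_p(l_j)`.
-/

/-- For a nonempty subset `I ⊆ {0, …, n}`, `lI q I = (∏_{i∈I} q_i) / gcd_{i∈I}(q_i)`. -/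
def lI {n : ℕ} (q : Fin (n + 1) → ℕ) (I : Finset (Fin (n + 1))) : ℕ :=
  (∏ i ∈ I, q i) / I.gcd q

/-- `lr q r = lcm { lI q I : I ⊆ {0,…,n}, |I| = r + 1 }`. -/
def lr {n : ℕ} (q : Fin (n + 1) → ℕ) (r : ℕ) : ℕ :=
  (Finset.powersetCard (r + 1) (Finset.univ : Finset (Fin (n + 1)))).lcm (lI q)

lemma lI_mul_gcd {n : ℕ} (q : Fin (n + 1) → ℕ) {I : Finset (Fin (n + 1))}
    {m : Fin (n + 1)} (hm : m ∈ I) : lI q I * I.gcd q = ∏ i ∈ I, q i :=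
  Nat.div_mul_cancel ((Finset.gcd_dvd hm).trans (Finset.dvd_prod_of_mem q hm))

lemma lI_ne_zero {n : ℕ} {q : Fin (n + 1) → ℕ} (hq : ∀ i, 0 < q i) {I : Finset (Fin (n + 1))}
    {m : Fin (n + 1)} (hm : m ∈ I) : lI q I ≠ 0 := by
  intro h
  have h1 := lI_mul_gcd q hm
  rw [h, zero_mul] at h1
  exact (Finset.prod_pos fun i _ => hq i).ne h1

lemma lr_ne_zero {n : ℕ} {q : Fin (n + 1) → ℕ} (hq : ∀ i, 0 < q i) (r : ℕ) : lr q r ≠ 0 := by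
  unfold lr
  rw [Ne, Finset.lcm_eq_zero_iff]
  rintro ⟨I, hI, h0⟩
  have hc := (Finset.mem_powersetCard.1 hI).2
  obtain ⟨m, hm⟩ := Finset.card_pos.1 (by omega : 0 < I.card)
  exact lI_ne_zero hq hm h0

/-- Dividing by the gcd removes exactly the contribution of an index of minimal valuation. -/
lemma factorization_lI {n : ℕ} {q : Fin (n + 1) → ℕ} (hq : ∀ i, 0 < q i) {p : ℕ}
    (hp : p.Prime) {I : Finset (Fin (n + 1))} {m : Fin (n + 1)} (hm : m ∈ I)
    (hmin : ∀ i ∈ I, (q m).factorization p ≤ (q i).factorization p) :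
    (lI q I).factorization p = ∑ i ∈ I.erase m, (q i).factorization p := by
  have hg0 : I.gcd q ≠ 0 := fun h => (hq m).ne' (Finset.gcd_eq_zero_iff.1 h m hm)
  have hgcd : (I.gcd q).factorization p = (q m).factorization p := by
    apply le_antisymm
    · exact (Nat.factorization_le_iff_dvd hg0 (hq m).ne').2 (Finset.gcd_dvd hm) p
    · rw [← hp.pow_dvd_iff_le_factorization hg0]
      exact Finset.dvd_gcd fun i hi =>
        (hp.pow_dvd_iff_le_factorization (hq i).ne').2 (hmin i hi)
  have h := congrArg (fun x => x.factorization p) (lI_mul_gcd q hm)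
  simp only [Nat.factorization_mul (lI_ne_zero hq hm) hg0,
    Nat.factorization_prod fun i _ => (hq i).ne', Finsupp.add_apply, Finsupp.finsetSum_apply,
    hgcd] at h
  rw [← Finset.sum_erase_add _ _ hm] at h
  exact Nat.add_right_cancel h

/-- A set `A` of `r` indices whose valuations are all at least that of an outside index `m`
contributes its full valuation to `l_r`, through the subset `A ∪ {m}`. -/
lemma sum_le_factorization_lr {n : ℕ} {q : Fin (n + 1) → ℕ} (hq : ∀ i, 0 < q i) {p : ℕ}
    (hp : p.Prime) {A : Finset (Fin (n + 1))} {m : Fin (n + 1)} (hm : m ∉ A)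
    (hmin : ∀ i ∈ A, (q m).factorization p ≤ (q i).factorization p) {r : ℕ} (hr : A.card = r) :
    ∑ i ∈ A, (q i).factorization p ≤ (lr q r).factorization p := by
  have hmem : m ∈ insert m A := Finset.mem_insert_self m A
  have h := factorization_lI hq hp hmem (by simpa using hmin)
  rw [Finset.erase_insert hm] at h
  rw [← h]
  refine (Nat.factorization_le_iff_dvd (lI_ne_zero hq hmem) (lr_ne_zero hq r)).2 ?_ p
  exact Finset.dvd_lcm (Finset.mem_powersetCard.2
    ⟨Finset.subset_univ _, by rw [Finset.card_insert_of_notMem hm, hr]⟩)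

/-- Integrality of the structure constants `ξ_k · ξ_j = (l_k l_j / l_{k+j}) ξ_{k+j}`:
for `k + j ≤ n`, the integer `l_{k+j}` divides `l_k · l_j`. -/
theorem lr_add_dvd_mul {n : ℕ} (hn : 1 ≤ n) (q : Fin (n + 1) → ℕ) (hq : ∀ i, 0 < q i)
    (k j : ℕ) (hkj : k + j ≤ n) :
    lr q (k + j) ∣ lr q k * lr q j := by
  refine Finset.lcm_dvd fun I hI => ?_
  have hc := (Finset.mem_powersetCard.1 hI).2
  have hne : I.Nonempty := Finset.card_pos.1 (by omega)
  obtain ⟨m₀, hm₀⟩ := hne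
  rw [← Nat.factorization_prime_le_iff_dvd (lI_ne_zero hq hm₀)
    (mul_ne_zero (lr_ne_zero hq k) (lr_ne_zero hq j))]
  intro p hp
  obtain ⟨m, hm, hmin⟩ := Finset.exists_min_image I (fun i => (q i).factorization p) ⟨m₀, hm₀⟩
  have hce : (I.erase m).card = k + j := by rw [Finset.card_erase_of_mem hm]; omega
  obtain ⟨A, hA, hAc⟩ := Finset.exists_subset_card_eq (by omega : k ≤ (I.erase m).card)
  have hBc : (I.erase m \ A).card = j := by rw [Finset.card_sdiff_of_subset hA]; omega
  have hB : I.erase m \ A ⊆ I.erase m := Finset.sdiff_subset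
  rw [factorization_lI hq hp hm hmin, ← Finset.sum_sdiff hA, add_comm,
    Nat.factorization_mul (lr_ne_zero hq k) (lr_ne_zero hq j), Finsupp.add_apply]
  exact add_le_add
    (sum_le_factorization_lr hq hp (fun h => Finset.notMem_erase m I (hA h))
      (fun i hi => hmin i (Finset.mem_of_mem_erase (hA hi))) hAc)
    (sum_le_factorization_lr hq hp (fun h => Finset.notMem_erase m I (hB h))
      (fun i hi => hmin i (Finset.mem_of_mem_erase (hB hi))) hBc)
end

section
/- Let n ≥ 1 and let q_0, …, q_n be positive integers, and define l_r as the lcm of l_I = (∏_{i∈I} q_i)/gcd_{i∈I}(q_i) over all subsets I ⊆ {0,…,n} of cardinality r+1. Then for every 0 ≤ r ≤ n−1, the integer l_r divides l_{r+1}. -/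
/-- Enlarging a nonempty index set by one element multiplies the product by `q j` and can only
shrink the gcd to a divisor of itself, so `l_I` divides the new value. -/
lemma lI_dvd_lI_insert {n : ℕ} (q : Fin (n + 1) → ℕ) (I : Finset (Fin (n + 1)))
    (hI : I.Nonempty) {j : Fin (n + 1)} (hj : j ∉ I) : lI q I ∣ lI q (insert j I) := by
  unfold lI
  obtain ⟨i, hi⟩ := hI
  have hgcd : (insert j I).gcd q ∣ I.gcd q := Finset.gcd_mono (Finset.subset_insert j I)
  have hprod : I.gcd q ∣ ∏ i ∈ I, q i :=
    (Finset.gcd_dvd hi).trans (Finset.dvd_prod_of_mem q hi)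
  rw [Finset.prod_insert hj, Nat.mul_div_assoc _ (hgcd.trans hprod)]
  exact (Nat.div_dvd_div_left hprod hgcd).mul_left (q j)

/-- For `0 ≤ r ≤ n - 1`, the integer `l_r` divides `l_{r+1}`. -/
theorem lr_dvd_lr_succ {n : ℕ} (hn : 1 ≤ n) (q : Fin (n + 1) → ℕ) (hq : ∀ i, 0 < q i)
    (r : ℕ) (hr : r ≤ n - 1) :
    lr q r ∣ lr q (r + 1) := by
  refine Finset.lcm_dvd fun I hI => ?_
  have hcard : I.card = r + 1 := (Finset.mem_powersetCard.mp hI).2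
  -- `|I| = r + 1 ≤ n < n + 1`, so some index lies outside `I`.
  obtain ⟨j, hj⟩ : ∃ j, j ∉ I := by
    by_contra! h
    have hfull := congrArg Finset.card (Finset.eq_univ_iff_forall.mpr h)
    rw [Finset.card_univ, Fintype.card_fin] at hfull
    omega
  have hne : I.Nonempty := Finset.card_pos.mp (by omega)
  refine (lI_dvd_lI_insert q I hne hj).trans (Finset.dvd_lcm ?_)
  exact Finset.mem_powersetCard.mpr
    ⟨Finset.subset_univ _, by rw [Finset.card_insert_of_notMem hj, hcard]⟩
end

section
/- Let n ≥ 1 and let q_0, …, q_n be pairwise coprime positive integers (gcd(q_i, q_j) = 1 for all i ≠ j). Then for every r with 1 ≤ r ≤ n, one has l_r = q_0 · q_1 · ⋯ · q_n, where l_r is the lcm of l_I = (∏_{i∈I} q_i)/gcd_{i∈I}(q_i) over all subsets I ⊆ {0,…,n} of cardinality r+1. (Consequently, for pairwise coprime weights the ratios l_r · l_{n−r} / l_n appearing in the pullback formula equal ∏ q_i for 1 ≤ r ≤ n−1.) -/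
lemma lI_eq_prod {n : ℕ} {q : Fin (n + 1) → ℕ}
    (hcop : ∀ i j, i ≠ j → Nat.Coprime (q i) (q j))
    {I : Finset (Fin (n + 1))} (hI : 1 < I.card) : lI q I = ∏ i ∈ I, q i := by
  obtain ⟨a, ha, b, hb, hab⟩ := Finset.one_lt_card.mp hI
  have hgcd : I.gcd q = 1 :=
    Nat.eq_one_of_dvd_coprimes (hcop a b hab) (Finset.gcd_dvd ha) (Finset.gcd_dvd hb)
  rw [lI, hgcd, Nat.div_one]

/-- For pairwise coprime positive weights `q_0, …, q_n` and `1 ≤ r ≤ n`,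
one has `l_r = q_0 · q_1 · ⋯ · q_n`. -/
theorem lr_eq_prod_of_pairwise_coprime {n : ℕ} (hn : 1 ≤ n) (q : Fin (n + 1) → ℕ)
    (hq : ∀ i, 0 < q i) (hcop : ∀ i j, i ≠ j → Nat.Coprime (q i) (q j))
    (r : ℕ) (hr1 : 1 ≤ r) (hrn : r ≤ n) :
    lr q r = ∏ i, q i := by
  apply Nat.dvd_antisymm
  · refine Finset.lcm_dvd fun I hI => ?_
    have hcard := (Finset.mem_powersetCard.mp hI).2
    rw [lI_eq_prod hcop (by omega)]
    exact Finset.prod_dvd_prod_of_subset _ _ _ (Finset.subset_univ I)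
  · refine Finset.prod_dvd_of_isRelPrime
      (fun i _ j _ hij => Nat.coprime_iff_isRelPrime.mp (hcop i j hij)) fun i _ => ?_
    obtain ⟨I, hiI, -, hcard⟩ := Finset.exists_subsuperset_card_eq
      (Finset.subset_univ {i}) (n := r + 1) (by simp) (by simpa using hrn)
    have hdvd : q i ∣ lI q I := by
      rw [lI_eq_prod hcop (by omega)]
      exact Finset.dvd_prod_of_mem q (Finset.singleton_subset_iff.mp hiI)
    exact hdvd.trans
      (Finset.dvd_lcm (Finset.mem_powersetCard.mpr ⟨Finset.subset_univ I, hcard⟩))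
end

section
/- Let n ≥ 1 and let q_0, …, q_n be positive integers, with ℂ* acting on ℂ^{n+1} ∖ {0} by λ · (x_0, …, x_n) = (λ^{q_0} x_0, …, λ^{q_n} x_n). Then the weights q_0, …, q_n are pairwise coprime if and only if every point x ∈ ℂ^{n+1} ∖ {0} with at least two nonzero coordinates has trivial stabilizer, i.e., for every such x and every λ ∈ ℂ*, λ · x = x implies λ = 1. (This is the orbit-space formulation of the fact that the weighted projective space ℙ(q_0,…,q_n) has at worst isolated singularities exactly when the weights are pairwise coprime.) -/
/-!
A point `x` is fixed by `l` exactly when `l ^ q i = 1` for every `i` in the support of `x`.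
If the support contains `i ≠ j`, the order of `l` divides `gcd (q i) (q j)`, so coprimality
forces `l = 1`. Conversely, for `i ≠ j` and `d = gcd (q i) (q j)`, a primitive `d`-th root of
unity fixes the point supported on `{i, j}`; if it must be `1`, then `d = 1`.
-/

/-- For the weighted `ℂ*`-action `λ · x = (λ^{q_0} x_0, …, λ^{q_n} x_n)` on
`ℂ^{n+1} ∖ {0}`, the weights `q_0, …, q_n` are pairwise coprime if and only if
every point with at least two nonzero coordinates has trivial stabilizer. -/
theorem pairwise_coprime_iff_trivial_stabilizer {n : ℕ} (hn : 1 ≤ n)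
    (q : Fin (n + 1) → ℕ) (hq : ∀ i, 0 < q i) :
    (∀ i j, i ≠ j → Nat.Coprime (q i) (q j)) ↔
      ∀ x : Fin (n + 1) → ℂ, (∃ i j, i ≠ j ∧ x i ≠ 0 ∧ x j ≠ 0) →
        ∀ l : ℂ, l ≠ 0 → (∀ i, l ^ q i * x i = x i) → l = 1 := by
  constructor
  · rintro hc x ⟨i, j, hij, hi, hj⟩ l - hl
    have h1 : l ^ q i = 1 := (mul_eq_right₀ hi).mp (hl i)
    have h2 : l ^ q j = 1 := (mul_eq_right₀ hj).mp (hl j)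
    have hd : orderOf l ∣ Nat.gcd (q i) (q j) :=
      Nat.dvd_gcd (orderOf_dvd_of_pow_eq_one h1) (orderOf_dvd_of_pow_eq_one h2)
    rw [hc i j hij] at hd
    exact orderOf_eq_one_iff.mp (Nat.dvd_one.mp hd)
  · intro h i j hij
    have hd : Nat.gcd (q i) (q j) ≠ 0 := (Nat.gcd_pos_of_pos_left _ (hq i)).ne'
    have hz := Complex.isPrimitiveRoot_exp _ hd
    have h1 := h (fun k => if k = i ∨ k = j then 1 else 0) ⟨i, j, hij, by simp, by simp⟩ _
      (hz.ne_zero hd) (by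
        intro k
        by_cases hk : k = i ∨ k = j
        · have hdvd : Nat.gcd (q i) (q j) ∣ q k := by
            rcases hk with rfl | rfl
            · exact Nat.gcd_dvd_left _ _
            · exact Nat.gcd_dvd_right _ _
          rw [(hz.pow_eq_one_iff_dvd _).mpr hdvd, one_mul]
        · simp [hk])
    rw [h1] at hz
    exact hz.unique IsPrimitiveRoot.one
end

section
/- Let q_0, …, q_n be positive integers and let φ : ℙ^n → ℙ(q_0,…,q_n) be the map induced by (x_0, …, x_n) ↦ (x_0^{q_0}, …, x_n^{q_n}) on the quotients of ℂ^{n+1} ∖ {0} by the standard and by the weighted ℂ*-actions, respectively. Then for every point y ∈ ℂ^{n+1} with all coordinates nonzero, the fiber φ^{-1}([y]) over the weighted orbit class [y] ∈ ℙ(q_0,…,q_n) is a finite set of cardinality exactly (q_0 · q_1 · ⋯ · q_n) / gcd(q_0, …, q_n). (This is the degree of the map φ.) -/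
/-!
A point `[x]` maps to `[y]` exactly when some rescaling of `x` satisfies `x_i ^ q_i = y_i` for
all `i`. Hence the fiber is the image in `ℙ^n` of the set of all choices of a `q_i`-th root of
each `y_i`, which has `∏ i, q i` elements (`card_roots`). Two such choices have the same class
if and only if they differ by a scalar `l` with `l ^ q_i = 1` for all `i`, that is, by a
`gcd(q_0, …, q_n)`-th root of unity; so every class contains exactly `gcd(q_0, …, q_n)` choices
(`card_classFiber`), and the fiber has the quotient of these two numbers as its cardinality.
-/

/-- The punctured affine space `ℂ^{n+1} ∖ {0}`. -/
abbrev PuncturedAffine (n : ℕ) : Type := {x : Fin (n + 1) → ℂ // x ≠ 0}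

/-- The orbit relation of the weighted `ℂ*`-action
`λ · (x_0, …, x_n) = (λ^{q_0} x_0, …, λ^{q_n} x_n)` on `ℂ^{n+1} ∖ {0}`;
the quotient `Quot (weightedRel q)` is the weighted projective space `ℙ(q_0,…,q_n)`
(for `q = 1` it is the ordinary projective space `ℙ^n`). -/
def weightedRel {n : ℕ} (q : Fin (n + 1) → ℕ) (x y : PuncturedAffine n) : Prop :=
  ∃ l : ℂ, l ≠ 0 ∧ ∀ i, l ^ q i * x.1 i = y.1 i

theorem weightedRel_equivalence {n : ℕ} (q : Fin (n + 1) → ℕ) :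
    Equivalence (weightedRel q) where
  refl x := ⟨1, one_ne_zero, by simp⟩
  symm := by
    rintro x y ⟨l, hl, h⟩
    refine ⟨l⁻¹, inv_ne_zero hl, fun i => ?_⟩
    rw [← h i, inv_pow, inv_mul_cancel_left₀ (pow_ne_zero _ hl)]
  trans := by
    rintro x y z ⟨l, hl, h⟩ ⟨m, hm, h'⟩
    exact ⟨m * l, mul_ne_zero hm hl, fun i => by rw [← h' i, ← h i, mul_pow, mul_assoc]⟩

theorem mk_eq_mk_iff {n : ℕ} (q : Fin (n + 1) → ℕ) (x y : PuncturedAffine n) :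
    Quot.mk (weightedRel q) x = Quot.mk (weightedRel q) y ↔ weightedRel q x y :=
  (weightedRel_equivalence q).quot_mk_eq_iff x y

theorem card_roots {k : ℕ} (hk : 0 < k) {a : ℂ} (ha : a ≠ 0) :
    Nat.card {z : ℂ // z ^ k = a} = k := by
  classical
  have hprim := Complex.isPrimitiveRoot_exp k hk.ne'
  have hroot : ∃ z : ℂ, z ^ k = a := IsAlgClosed.exists_pow_nat_eq a hk
  have hcard : (Polynomial.nthRoots k a).toFinset.card = k := by
    rw [Multiset.toFinset_card_of_nodup (hprim.nthRoots_nodup ha), hprim.card_nthRoots,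
      if_pos hroot]
  rw [Nat.subtype_card (Polynomial.nthRoots k a).toFinset
    fun z => by simp [Polynomial.mem_nthRoots hk], hcard]

/-- The points `x` of `ℂ^{n+1}` with `x_i ^ q_i = y_i` for all `i`, as families of roots. -/
abbrev RootChoices {n : ℕ} (q : Fin (n + 1) → ℕ) (y : Fin (n + 1) → ℂ) : Type :=
  ∀ i, {z : ℂ // z ^ q i = y i}

theorem RootChoices.ne_zero {n : ℕ} {q : Fin (n + 1) → ℕ} (hq : ∀ i, 0 < q i)
    {y : Fin (n + 1) → ℂ} (hy : ∀ i, y i ≠ 0) (s : RootChoices q y) (i : Fin (n + 1)) :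
    (s i).1 ≠ 0 := fun h => hy i (by rw [← (s i).2, h, zero_pow (hq i).ne'])

/-- A family of roots of nonzero numbers, as a point of `ℂ^{n+1} ∖ {0}`. -/
def rootPoint {n : ℕ} {q : Fin (n + 1) → ℕ} (hq : ∀ i, 0 < q i)
    {y : Fin (n + 1) → ℂ} (hy : ∀ i, y i ≠ 0) (s : RootChoices q y) : PuncturedAffine n :=
  ⟨fun i => (s i).1, fun h => s.ne_zero hq hy 0 (congrFun h 0)⟩

/-- The class of `s` in `ℙ^n` contains exactly `gcd(q_0, …, q_n)` families of roots, because
`z ↦ z • s` is a bijection onto them from the `gcd(q_0, …, q_n)`-th roots of unity. -/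
theorem card_classFiber {n : ℕ} {q : Fin (n + 1) → ℕ} (hq : ∀ i, 0 < q i)
    {y : Fin (n + 1) → ℂ} (hy : ∀ i, y i ≠ 0) (s : RootChoices q y) :
    Nat.card {t : RootChoices q y // Quot.mk (weightedRel fun _ => 1) (rootPoint hq hy t) =
      Quot.mk (weightedRel fun _ => 1) (rootPoint hq hy s)} = Finset.univ.gcd q := by
  have hgpos : 0 < Finset.univ.gcd q := by
    refine Nat.pos_of_ne_zero fun h => (hq 0).ne' ?_
    exact Finset.gcd_eq_zero_iff.1 h 0 (Finset.mem_univ 0)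
  have hroot (z : ℂ) (hz : z ^ Finset.univ.gcd q = 1) (i) : z ^ q i = 1 := by
    obtain ⟨c, hc⟩ := Finset.gcd_dvd (f := q) (Finset.mem_univ i)
    rw [hc, pow_mul, hz, one_pow]
  rw [← card_roots hgpos (one_ne_zero (α := ℂ))]
  have hmem (z : {z : ℂ // z ^ Finset.univ.gcd q = 1}) (i) : (z.1 * (s i).1) ^ q i = y i := by
    rw [mul_pow, hroot z.1 z.2, one_mul, (s i).2]
  have hclass (z : {z : ℂ // z ^ Finset.univ.gcd q = 1}) :
      Quot.mk (weightedRel fun _ => 1) (rootPoint hq hy fun i => ⟨z.1 * (s i).1, hmem z i⟩) =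
        Quot.mk (weightedRel fun _ => 1) (rootPoint hq hy s) := by
    refine ((mk_eq_mk_iff _ _ _).2 ⟨z.1, ?_, fun i => by simp [rootPoint]⟩).symm
    intro h
    have := z.2
    rw [h, zero_pow hgpos.ne'] at this
    exact zero_ne_one this
  refine (Nat.card_congr (Equiv.ofBijective
    (fun z => ⟨fun i => ⟨z.1 * (s i).1, hmem z i⟩, hclass z⟩) ⟨?_, ?_⟩)).symm
  · intro z w h
    have h0 := congrArg Subtype.val (congrFun (congrArg Subtype.val h) 0)
    exact Subtype.ext (mul_right_cancel₀ (s.ne_zero hq hy 0) h0)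
  · rintro ⟨t, ht⟩
    obtain ⟨l, hl, h⟩ := (mk_eq_mk_iff _ _ _).1 ht.symm
    have h' (i) : l * (s i).1 = (t i).1 := by simpa [rootPoint] using h i
    refine ⟨⟨l, ?_⟩, ?_⟩
    · apply orderOf_dvd_iff_pow_eq_one.1
      refine Finset.dvd_gcd fun i _ => orderOf_dvd_of_pow_eq_one ?_
      have h2 := (t i).2
      rw [← h' i, mul_pow, (s i).2] at h2
      exact mul_right_cancel₀ (hy i) (h2.trans (one_mul _).symm)
    · exact Subtype.ext (funext fun i => Subtype.ext (h' i))

/-- If `φ : ℙ^n → ℙ(q_0,…,q_n)` is the map induced by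
`(x_0, …, x_n) ↦ (x_0^{q_0}, …, x_n^{q_n})`, then the fiber of `φ` over the class of
any point `y` with all coordinates nonzero is a finite set of cardinality exactly
`(q_0 ⋯ q_n) / gcd(q_0, …, q_n)` — the degree of `φ`. -/
theorem powerMap_fiber_card {n : ℕ} (q : Fin (n + 1) → ℕ) (hq : ∀ i, 0 < q i)
    (φ : Quot (weightedRel (n := n) fun _ => 1) → Quot (weightedRel q))
    (hφ : ∀ x y : PuncturedAffine n, (∀ i, y.1 i = x.1 i ^ q i) →
      φ (Quot.mk _ x) = Quot.mk _ y)
    (y : PuncturedAffine n) (hy : ∀ i, y.1 i ≠ 0) :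
    (φ ⁻¹' {Quot.mk _ y}).Finite ∧
      Nat.card (φ ⁻¹' {Quot.mk _ y}) =
        (∏ i, q i) / (Finset.univ : Finset (Fin (n + 1))).gcd q := by
  classical
  -- `f` sends a choice of coordinate roots to its class, regarded as a point of the fiber.
  let f : RootChoices q y.1 → (φ ⁻¹' {Quot.mk _ y}) := fun s =>
    ⟨Quot.mk _ (rootPoint hq hy s), hφ _ _ fun i => ((s i).2).symm⟩
  have hf : Function.Surjective f := by
    rintro ⟨p, hp⟩
    induction p using Quot.ind with
    | mk x =>
      have hpow : (fun i => x.1 i ^ q i) ≠ 0 := by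
        intro h
        apply x.2
        funext i
        exact eq_zero_of_pow_eq_zero (congrFun h i)
      have h1 := hφ x ⟨_, hpow⟩ fun _ => rfl
      obtain ⟨l, hl, h⟩ := (mk_eq_mk_iff q _ _).1 (h1.symm.trans hp)
      -- Rescaling `x` by `l` gives a representative whose powers are exactly `y`.
      refine ⟨fun i => ⟨l * x.1 i, by rw [mul_pow]; exact h i⟩, Subtype.ext ?_⟩
      refine (((mk_eq_mk_iff _ _ _).2 ⟨l, hl, fun i => ?_⟩)).symm
      simp [rootPoint]
  have hgpos : 0 < Finset.univ.gcd q := by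
    refine Nat.pos_of_ne_zero fun h => (hq 0).ne' ?_
    exact Finset.gcd_eq_zero_iff.1 h 0 (Finset.mem_univ 0)
  have hfin (i) : Finite {z : ℂ // z ^ q i = y.1 i} :=
    Nat.finite_of_card_ne_zero (by rw [card_roots (hq i) (hy i)]; exact (hq i).ne')
  have : Finite (RootChoices q y.1) := Pi.finite
  have hfiber : Finite (φ ⁻¹' {Quot.mk _ y}) := Finite.of_surjective f hf
  refine ⟨hfiber, ?_⟩
  have hcardS : Nat.card (RootChoices q y.1) = ∏ i, q i := by
    rw [RootChoices, Nat.card_pi]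
    exact Finset.prod_congr rfl fun i _ => card_roots (hq i) (hy i)
  have hcardf (p) : Nat.card {s // f s = p} = Finset.univ.gcd q := by
    obtain ⟨s, rfl⟩ := hf p
    rw [← card_classFiber hq hy s]
    exact Nat.card_congr (Equiv.subtypeEquivRight fun t => by simp [f, Subtype.ext_iff])
  have := Fintype.ofFinite (φ ⁻¹' {Quot.mk _ y})
  have hmul : ∏ i, q i = Nat.card (φ ⁻¹' {Quot.mk _ y}) * Finset.univ.gcd q := by
    rw [← hcardS, ← Nat.card_congr (Equiv.sigmaFiberEquiv f), Nat.card_sigma]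
    simp [hcardf]
  rw [hmul, Nat.mul_div_cancel _ hgpos]
end
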